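/- (Core of Theorem 2, acceleration-controlled bicycle.) Let p, v ∈ ℝ² with ‖p‖ > r > 0 and v ≠ 0, let h = ⟨p, v⟩ + ‖v‖·√(‖p‖² − r²), and let κ : ℝ → ℝ satisfy κ(s) ≥ 0 whenever s ≥ 0. If h ≥ 0, then ⟨v, v⟩ + ⟨p, v⟩·‖v‖/√(‖p‖² − r²) + κ(h) ≥ 0. Consequently, on the safe set {h ≥ 0}, whenever the input-dependent part of ḣ vanishes (L_g h = 0), the CBF inequality ḣ + κ(h) ≥ 0 still holds, so h is a valid CBF on the set C = {h ≥ 0}. -/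

import Mathlib

open scoped RealInnerProductSpace

/-- core of Theorem 2, acceleration-controlled bicycle: on the safe
set `{h ≥ 0}`, with `h = ⟪p,v⟫ + ‖v‖√(‖p‖²−r²)` and `κ` nonnegative on
nonnegative arguments, one has `⟪v,v⟫ + ⟪p,v⟫‖v‖/√(‖p‖²−r²) + κ(h) ≥ 0`. -/
theorem c3bf_bicycle_valid_on_safe_set
    (p v : EuclideanSpace ℝ (Fin 2)) (r : ℝ) (κ : ℝ → ℝ)
    (hr : 0 < r) (hp : r < ‖p‖) (hv : v ≠ 0)
    (hκ : ∀ s : ℝ, 0 ≤ s → 0 ≤ κ s)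
    (hh : 0 ≤ ⟪p, v⟫ + ‖v‖ * Real.sqrt (‖p‖ ^ 2 - r ^ 2)) :
    0 ≤ ⟪v, v⟫ + ⟪p, v⟫ * ‖v‖ / Real.sqrt (‖p‖ ^ 2 - r ^ 2)
        + κ (⟪p, v⟫ + ‖v‖ * Real.sqrt (‖p‖ ^ 2 - r ^ 2)) := by
  have hs : 0 < Real.sqrt (‖p‖ ^ 2 - r ^ 2) := Real.sqrt_pos.mpr (by nlinarith)
  have hk := hκ _ hh
  have key : ⟪v, v⟫ + ⟪p, v⟫ * ‖v‖ / Real.sqrt (‖p‖ ^ 2 - r ^ 2)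
      = ‖v‖ / Real.sqrt (‖p‖ ^ 2 - r ^ 2)
        * (⟪p, v⟫ + ‖v‖ * Real.sqrt (‖p‖ ^ 2 - r ^ 2)) := by
    rw [real_inner_self_eq_norm_sq]
    have := hs.ne'
    generalize Real.sqrt (‖p‖ ^ 2 - r ^ 2) = t at *
    field_simp
    ring
  rw [key]
  exact add_nonneg (mul_nonneg (div_nonneg (norm_nonneg v) hs.le) hh) hk
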